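/- Let N = (P,T,F,Var) be a UDPN and i, f ℚ⁺-markings. Then f is ℚ⁺-reachable from i if and only if there exist ℚ⁺-markings i', f' and a ℚ-run σ' such that: (1) i' is ℚ⁺-reachable from i; (2) i' →σ'_ℚ f'; (3) f is ℚ⁺-reachable from f'; (4) i'(p,α) > 0 for every (p,α) ∈ Pre(σ'); and (5) f'(p,α) > 0 for every (p,α) ∈ Post(σ'). -/

import Mathlib

open Finset

noncomputable section
open scoped Classical

/-- An unordered data Petri net over places `P`, transitions `T`, variables `V`,
with countably infinite data domain `D = ℕ`.
`pre p t` is the function `F(p,t) : V → ℕ` and `post t p` is `F(t,p) : V → ℕ`. -/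
structure UDPN (P T V : Type) where
  pre : P → T → V → ℕ
  post : T → P → V → ℕ

/-- An X-step `(c, t, π)`: coefficient, transition and mode. -/
structure Step (T V : Type) where
  c : ℚ
  t : T
  π : V → ℕ

variable {P T V : Type} [Fintype P] [Fintype T] [Fintype V]

/-- The `P × V` rational matrix `F(•,t)`. -/
def preMat (N : UDPN P T V) (t : T) (p : P) (x : V) : ℚ := (N.pre p t x : ℚ)

/-- The displacement `Δ(t) = F(t,•) − F(•,t)` as a `P × V` rational matrix. -/
def delta (N : UDPN P T V) (t : T) (p : P) (x : V) : ℚ :=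
  (N.post t p x : ℚ) - (N.pre p t x : ℚ)

/-- `A ∘ π⁻¹`: the `P × ℕ` matrix with `(A∘π⁻¹)(p,α) = A(p,x)` if `α = π x`,
and `0` if `α` is outside the range of `π`. (For injective `π` the sum has at
most one nonzero summand.) -/
def compInv (A : P → V → ℚ) (π : V → ℕ) (p : P) (α : ℕ) : ℚ :=
  ∑ x : V, if π x = α then A p x else 0

/-- Only finitely many nonzero columns. -/
def FinCols (m : P → ℕ → ℚ) : Prop := {α : ℕ | ∃ p, m p α ≠ 0}.Finite

/-- `IsMarking pos m`: `m` is an X-marking; `pos = true` corresponds to `X = ℚ⁺`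
(all entries nonnegative), `pos = false` to `X = ℚ`. -/
def IsMarking (pos : Bool) (m : P → ℕ → ℚ) : Prop :=
  FinCols m ∧ (pos = true → ∀ p α, 0 ≤ m p α)

/-- Data values of a marking. -/
def dvalM (m : P → ℕ → ℚ) : Set ℕ := {α | ∃ p, m p α ≠ 0}

/-- A valid X-step: nonnegative coefficient and injective mode.  -/
def IsStep (s : Step T V) : Prop := 0 ≤ s.c ∧ Function.Injective s.π

/-- A valid X-run: a finite sequence of X-steps. -/
def IsRun (ρ : List (Step T V)) : Prop := ∀ s ∈ ρ, IsStep s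

/-- The effect `c · (Δ(t) ∘ π⁻¹)` of a step. -/
def stepEffect (N : UDPN P T V) (s : Step T V) (p : P) (α : ℕ) : ℚ :=
  s.c * compInv (delta N s.t) s.π p α

/-- The effect `Δ(ρ)` of a run. -/
def runEffect (N : UDPN P T V) (ρ : List (Step T V)) (p : P) (α : ℕ) : ℚ :=
  (ρ.map fun s => stepEffect N s p α).sum

/-- A step `(c,t,π)` is fireable at `m` if `m − c·(F(•,t)∘π⁻¹)` is again an
X-marking: finitely many nonzero columns and (when `pos`) nonnegative entries. -/
def stepFireable (pos : Bool) (N : UDPN P T V) (m : P → ℕ → ℚ) (s : Step T V) : Prop :=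
  FinCols (fun p α => m p α - s.c * compInv (preMat N s.t) s.π p α) ∧
  (pos = true → ∀ p α, 0 ≤ m p α - s.c * compInv (preMat N s.t) s.π p α)

/-- A run is fireable at `m` if each step is fireable at the corresponding
intermediate marking. -/
def runFireable (pos : Bool) (N : UDPN P T V) : (P → ℕ → ℚ) → List (Step T V) → Prop
  | _, [] => True
  | m, s :: ρ => stepFireable pos N m s ∧
      runFireable pos N (fun p α => m p α + stepEffect N s p α) ρ

/-- `m →ρ_X m'` : `ρ` is fireable at `m` and `m' = m + Δ(ρ)`. -/
def Reaches (pos : Bool) (N : UDPN P T V) (i : P → ℕ → ℚ) (ρ : List (Step T V))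
    (f : P → ℕ → ℚ) : Prop :=
  runFireable pos N i ρ ∧ f = fun p α => i p α + runEffect N ρ p α

/-- `f` is X-reachable from `i`. -/
def Reach (pos : Bool) (N : UDPN P T V) (i f : P → ℕ → ℚ) : Prop :=
  ∃ ρ, IsRun ρ ∧ Reaches pos N i ρ f

/-- `vars(t)`. -/
def varsOf (N : UDPN P T V) (t : T) : Set V :=
  {x | ∃ p, N.pre p t x ≠ 0 ∨ N.post t p x ≠ 0}

/-- `maxvars(N) = max_{t ∈ T} |vars(t)|` (0 if `T` is empty). -/
def maxvars (N : UDPN P T V) : ℕ :=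
  Finset.univ.sup fun t : T => (varsOf N t).ncard

/-- `dval(ρ)`: the data values used by a run. -/
def runDval (N : UDPN P T V) (ρ : List (Step T V)) : Set ℕ :=
  {α | ∃ s ∈ ρ, ∃ x ∈ varsOf N s.t, s.π x = α}
/-- For `α ∈ E`: the least element of `{β ∈ E | β > α}` if nonempty, else `min E`. -/
def nextE (E : Finset ℕ) (α : ℕ) : ℕ :=
  if h : (E.filter fun β => α < β).Nonempty then (E.filter fun β => α < β).min' h
  else if h' : E.Nonempty then E.min' h' else 0

/-- The inverse of `nextE` on `E`: the greatest element of `{γ ∈ E | γ < β}` if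
nonempty, else `max E`. -/
def prevE (E : Finset ℕ) (β : ℕ) : ℕ :=
  if h : (E.filter fun γ => γ < β).Nonempty then (E.filter fun γ => γ < β).max' h
  else if h' : E.Nonempty then E.max' h' else 0

/-- The mode `π'` of `rot(E,ω)`, characterized by: the permutation matrix `P'` of
`π'` satisfies `P'(•,α) = P(•,α)` for `α ∉ E` and `P'(•,α) = P(•, nextE α)` for
`α ∈ E` (i.e. `π' x = α ↔ π x = nextE α` for `α ∈ E`). -/
def rotMode {V : Type} (E : Finset ℕ) (π : V → ℕ) (x : V) : ℕ :=
  if π x ∈ E then prevE E (π x) else π x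

/-- `rot(E,ω)`. -/
def rotStep (E : Finset ℕ) (s : Step T V) : Step T V := ⟨s.c, s.t, rotMode E s.π⟩

/-- The uniformization `U(E,ω)`: the concatenation
`rot^0(E, ω/|E|) ⋯ rot^{|E|−1}(E, ω/|E|)`. -/
def uniformize (E : Finset ℕ) (s : Step T V) : List (Step T V) :=
  (List.range E.card).map fun k => (rotStep E)^[k] ⟨s.c / (E.card : ℚ), s.t, s.π⟩

/-- Column `α` of `Δ(t)·P_π` is zero. -/
def zeroCol (N : UDPN P T V) (s : Step T V) (α : ℕ) : Prop :=
  ∀ p, compInv (delta N s.t) s.π p α = 0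

/-- The transposition of the data values `α` and `β`. -/
def swapVal (α β γ : ℕ) : ℕ := if γ = α then β else if γ = β then α else γ

/-- `R(α,E,ω)`: if column `α` of `Δ(t)·P_π` is zero then `ω` itself; otherwise the
step whose permutation matrix is obtained from `P_π` by exchanging columns `α` and
`β`, where `β` is the least datum in `E` whose column of `Δ(t)·P_π` is zero. -/
def replaceStep (N : UDPN P T V) (α : ℕ) (E : Finset ℕ) (s : Step T V) : Step T V :=
  if zeroCol N s α then s
  else if h : (E.filter fun β => zeroCol N s β).Nonempty then
    ⟨s.c, s.t, fun x => swapVal α ((E.filter fun β => zeroCol N s β).min' h) (s.π x)⟩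
  else s

/-- `dec(E,α,σ)`: the concatenation `U(E,R(α,E,σ(1))) ⋯ U(E,R(α,E,σ(n)))`. -/
def decRun (N : UDPN P T V) (α : ℕ) (E : Finset ℕ) (σ : List (Step T V)) :
    List (Step T V) :=
  σ.flatMap fun s => uniformize E (replaceStep N α E s)

/-- A histogram of order `q`: a `V × ℕ` matrix with nonnegative rational entries
and finitely many nonzero columns, every row summing to `q` and every column
summing to at most `q`. -/
def IsHistogram (H : V → ℕ → ℚ) (q : ℚ) : Prop :=
  0 ≤ q ∧ (∀ x α, 0 ≤ H x α) ∧ ({α | ∃ x, H x α ≠ 0}).Finite ∧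
  (∀ x, ∑ᶠ α, H x α = q) ∧ (∀ α, ∑ x : V, H x α ≤ q)

/-- `col(H)`: the nonzero columns of `H`. -/
def colH (H : V → ℕ → ℚ) : Set ℕ := {α | ∃ x, H x α ≠ 0}

/-- The permutation matrix `P_π` of a mode `π`. -/
def permMat {V : Type} (π : V → ℕ) (x : V) (α : ℕ) : ℚ := if π x = α then 1 else 0

/-- `Pre(ρ)`: pairs `(p,α)` of tokens consumed by the run `ρ`. -/
def preSet (N : UDPN P T V) (ρ : List (Step T V)) : Set (P × ℕ) :=
  {pa | ∃ s ∈ ρ, ∃ x, 0 < N.pre pa.1 s.t x ∧ s.π x = pa.2}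

/-- `Post(ρ)`: pairs `(p,α)` of tokens produced by the run `ρ`. -/
def postSet (N : UDPN P T V) (ρ : List (Step T V)) : Set (P × ℕ) :=
  {pa | ∃ s ∈ ρ, ∃ x, 0 < N.post s.t pa.1 x ∧ s.π x = pa.2}

/-- A loop-less UDPN: `PrePlace(t) ∩ PostPlace(t) = ∅` for every transition. -/
def IsLoopless (N : UDPN P T V) : Prop :=
  ∀ t : T, ¬ ∃ p : P, (∃ x, 0 < N.pre p t x) ∧ (∃ x, 0 < N.post t p x)

set_option linter.unusedSectionVars false

/-- The matrix `F(t,•)` as a `P × V` rational matrix. -/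
def postMat (N : UDPN P T V) (t : T) (p : P) (x : V) : ℚ := (N.post t p x : ℚ)

/-- The total amount of tokens consumed by a run, place by place and datum by datum. -/
def runConsume (N : UDPN P T V) (ρ : List (Step T V)) (p : P) (α : ℕ) : ℚ :=
  (ρ.map fun s => s.c * compInv (preMat N s.t) s.π p α).sum

/-- The total amount of tokens produced by a run, place by place and datum by datum. -/
def runProduce (N : UDPN P T V) (ρ : List (Step T V)) (p : P) (α : ℕ) : ℚ :=
  (ρ.map fun s => s.c * compInv (postMat N s.t) s.π p α).sum

/-- The run obtained by multiplying every coefficient by `r`. -/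
def scaleRun (r : ℚ) (ρ : List (Step T V)) : List (Step T V) :=
  ρ.map fun s => ⟨r * s.c, s.t, s.π⟩

theorem compInv_delta (N : UDPN P T V) (t : T) (π : V → ℕ) (p : P) (α : ℕ) :
    compInv (delta N t) π p α = compInv (postMat N t) π p α - compInv (preMat N t) π p α := by
  simp only [compInv, delta, postMat, preMat, ← Finset.sum_sub_distrib]
  refine Finset.sum_congr rfl fun x _ => ?_
  split_ifs <;> simp

theorem compInv_nonneg {A : P → V → ℚ} {π : V → ℕ} {p : P} {α : ℕ} (hA : ∀ x, 0 ≤ A p x) :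
    0 ≤ compInv A π p α :=
  Finset.sum_nonneg fun x _ => by split_ifs <;> simp [hA]

theorem exists_of_compInv_ne_zero {A : P → V → ℚ} {π : V → ℕ} {p : P} {α : ℕ}
    (h : compInv A π p α ≠ 0) : ∃ x, π x = α ∧ A p x ≠ 0 := by
  obtain ⟨x, -, hx⟩ := Finset.exists_ne_zero_of_sum_ne_zero h
  by_cases hπ : π x = α
  · exact ⟨x, hπ, by simpa [hπ] using hx⟩
  · simp [hπ] at hx

theorem runEffect_eq_sub (N : UDPN P T V) (ρ : List (Step T V)) (p : P) (α : ℕ) :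
    runEffect N ρ p α = runProduce N ρ p α - runConsume N ρ p α := by
  induction ρ with
  | nil => simp [runEffect, runProduce, runConsume]
  | cons s ρ ih =>
    simp only [runEffect, runProduce, runConsume, List.map_cons, List.sum_cons, stepEffect,
      compInv_delta] at ih ⊢
    rw [ih]
    ring

theorem runConsume_nonneg (N : UDPN P T V) {ρ : List (Step T V)} (hρ : IsRun ρ) (p : P) (α : ℕ) :
    0 ≤ runConsume N ρ p α := by
  refine List.sum_nonneg fun a ha => ?_
  obtain ⟨s, hs, rfl⟩ := List.mem_map.1 ha
  exact mul_nonneg (hρ s hs).1 (compInv_nonneg fun x => Nat.cast_nonneg _)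

theorem mem_preSet_of_runConsume_ne_zero {N : UDPN P T V} {ρ : List (Step T V)} {p : P} {α : ℕ}
    (h : runConsume N ρ p α ≠ 0) : (p, α) ∈ preSet N ρ := by
  by_contra hn
  refine h (List.sum_eq_zero fun a ha => ?_)
  obtain ⟨s, hs, rfl⟩ := List.mem_map.1 ha
  by_contra hne
  obtain ⟨x, hx, hA⟩ := exists_of_compInv_ne_zero (right_ne_zero_of_mul hne)
  exact hn ⟨s, hs, x, Nat.pos_of_ne_zero (by simpa [preMat] using hA), hx⟩

theorem mem_postSet_of_runProduce_ne_zero {N : UDPN P T V} {ρ : List (Step T V)} {p : P} {α : ℕ}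
    (h : runProduce N ρ p α ≠ 0) : (p, α) ∈ postSet N ρ := by
  by_contra hn
  refine h (List.sum_eq_zero fun a ha => ?_)
  obtain ⟨s, hs, rfl⟩ := List.mem_map.1 ha
  by_contra hne
  obtain ⟨x, hx, hA⟩ := exists_of_compInv_ne_zero (right_ne_zero_of_mul hne)
  exact hn ⟨s, hs, x, Nat.pos_of_ne_zero (by simpa [postMat] using hA), hx⟩

theorem finCols_compInv (A : P → V → ℚ) (π : V → ℕ) : FinCols (compInv A π) := by
  refine (Set.finite_range π).subset ?_
  rintro α ⟨p, hp⟩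
  obtain ⟨x, hx, -⟩ := exists_of_compInv_ne_zero hp
  exact ⟨x, hx⟩

theorem FinCols.add_mul {m k : P → ℕ → ℚ} (hm : FinCols m) (hk : FinCols k) (c : ℚ) :
    FinCols fun p α => m p α + c * k p α := by
  refine (hm.union hk).subset ?_
  rintro α ⟨p, hp⟩
  by_contra hn
  simp only [Set.mem_union, Set.mem_ofPred_eq, not_or, not_exists, not_not] at hn
  simp [hn.1 p, hn.2 p] at hp

theorem finCols_runEffect (N : UDPN P T V) (ρ : List (Step T V)) : FinCols (runEffect N ρ) := by
  induction ρ with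
  | nil => simp [FinCols, runEffect]
  | cons s ρ ih =>
    convert ih.add_mul (finCols_compInv (delta N s.t) s.π) s.c using 3
    simp [runEffect, stepEffect, add_comm]

theorem runFireable_append {pos : Bool} {N : UDPN P T V} {ρ τ : List (Step T V)} :
    ∀ {m : P → ℕ → ℚ}, runFireable pos N m (ρ ++ τ) ↔
      runFireable pos N m ρ ∧ runFireable pos N (fun p α => m p α + runEffect N ρ p α) τ := by
  induction ρ with
  | nil => simp [runFireable, runEffect]
  | cons s ρ ih => simp [runFireable, ih, runEffect, and_assoc, add_assoc]

theorem Reach.refl (pos : Bool) (N : UDPN P T V) (m : P → ℕ → ℚ) : Reach pos N m m :=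
  ⟨[], by simp [IsRun], trivial, by simp [runEffect]⟩

theorem Reach.trans {pos : Bool} {N : UDPN P T V} {m₁ m₂ m₃ : P → ℕ → ℚ}
    (h₁ : Reach pos N m₁ m₂) (h₂ : Reach pos N m₂ m₃) : Reach pos N m₁ m₃ := by
  obtain ⟨ρ, hρ, hρf, rfl⟩ := h₁
  obtain ⟨τ, hτ, hτf, rfl⟩ := h₂
  refine ⟨ρ ++ τ, fun s hs => (List.mem_append.1 hs).elim (hρ s) (hτ s),
    runFireable_append.2 ⟨hρf, hτf⟩, ?_⟩
  simp [runEffect, add_assoc]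

theorem runFireable_of_runConsume_le {N : UDPN P T V} {ρ : List (Step T V)} (hρ : IsRun ρ) :
    ∀ {m : P → ℕ → ℚ}, FinCols m → (∀ p α, runConsume N ρ p α ≤ m p α) →
      runFireable true N m ρ := by
  induction ρ with
  | nil => exact fun _ _ => trivial
  | cons s ρ ih =>
    intro m hm hle
    have hρ' : IsRun ρ := fun a ha => hρ a (List.mem_cons_of_mem s ha)
    have hcons : ∀ p α, runConsume N (s :: ρ) p α =
        s.c * compInv (preMat N s.t) s.π p α + runConsume N ρ p α := fun p α => by
      simp [runConsume]
    refine ⟨⟨?_, fun _ p α => ?_⟩, ih hρ' (hm.add_mul (finCols_compInv _ _) s.c) fun p α => ?_⟩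
    · simpa [sub_eq_add_neg] using hm.add_mul (finCols_compInv (preMat N s.t) s.π) (-s.c)
    · linarith [hle p α, hcons p α, runConsume_nonneg N hρ' p α]
    · have hpost : 0 ≤ s.c * compInv (postMat N s.t) s.π p α :=
        mul_nonneg (hρ s List.mem_cons_self).1 (compInv_nonneg fun x => Nat.cast_nonneg _)
      rw [stepEffect, compInv_delta, mul_sub]
      linarith [hle p α, hcons p α]

theorem IsRun.scaleRun {ρ : List (Step T V)} (hρ : IsRun ρ) {r : ℚ} (hr : 0 ≤ r) :
    IsRun (scaleRun r ρ) := by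
  intro s' hs'
  obtain ⟨s, hs, rfl⟩ := List.mem_map.1 hs'
  exact ⟨mul_nonneg hr (hρ s hs).1, (hρ s hs).2⟩

theorem runEffect_scaleRun (N : UDPN P T V) (r : ℚ) (ρ : List (Step T V)) (p : P) (α : ℕ) :
    runEffect N (scaleRun r ρ) p α = r * runEffect N ρ p α := by
  simp [runEffect, scaleRun, stepEffect, Function.comp_def, mul_assoc, List.sum_map_mul_left]

theorem runConsume_scaleRun (N : UDPN P T V) (r : ℚ) (ρ : List (Step T V)) (p : P) (α : ℕ) :
    runConsume N (scaleRun r ρ) p α = r * runConsume N ρ p α := by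
  simp [runConsume, scaleRun, Function.comp_def, mul_assoc, List.sum_map_mul_left]

theorem finite_preSet (N : UDPN P T V) (ρ : List (Step T V)) : (preSet N ρ).Finite := by
  have hD : (⋃ s ∈ {s | s ∈ ρ}, Set.range s.π).Finite :=
    (List.finite_toSet ρ).biUnion fun s _ => Set.finite_range s.π
  refine (Set.finite_univ.prod hD).subset ?_
  rintro ⟨p, α⟩ ⟨s, hs, x, -, hx⟩
  exact ⟨trivial, Set.mem_biUnion hs ⟨x, hx⟩⟩

/-- Splitting a ℚ-run into many equal fractions makes it ℚ⁺-fireable, provided the source is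
positive wherever it consumes and the target is positive wherever it produces. -/
theorem reach_of_pos_on_preSet_postSet {N : UDPN P T V} {m : P → ℕ → ℚ} {σ : List (Step T V)}
    (hm : IsMarking true m) (hσ : IsRun σ)
    (hm' : ∀ p α, 0 ≤ m p α + runEffect N σ p α)
    (hpre : ∀ pa ∈ preSet N σ, 0 < m pa.1 pa.2)
    (hpost : ∀ pa ∈ postSet N σ, 0 < m pa.1 pa.2 + runEffect N σ pa.1 pa.2) :
    Reach true N m fun p α => m p α + runEffect N σ p α := by
  obtain ⟨n, hn, hn0⟩ : ∃ n : ℕ, (∀ pa ∈ preSet N σ,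
      0 < m pa.1 pa.2 + runEffect N σ pa.1 pa.2 →
      runConsume N σ pa.1 pa.2 ≤ n * m pa.1 pa.2 ∧
      runConsume N σ pa.1 pa.2 ≤ n * (m pa.1 pa.2 + runEffect N σ pa.1 pa.2)) ∧ 0 < n := by
    have hlarge : ∀ a b : ℚ, 0 < b → ∀ᶠ n : ℕ in Filter.atTop, a ≤ n * b := fun a b hb =>
      (tendsto_natCast_atTop_atTop.atTop_mul_const hb).eventually_ge_atTop a
    refine (Filter.Eventually.and ?_ (Filter.eventually_gt_atTop 0)).exists
    refine (Filter.eventually_all_finite (finite_preSet N σ)).2 fun pa hpa => ?_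
    by_cases hpos : 0 < m pa.1 pa.2 + runEffect N σ pa.1 pa.2
    · filter_upwards [hlarge _ _ (hpre pa hpa), hlarge _ _ hpos] with n h₁ h₂ _ using ⟨h₁, h₂⟩
    · exact Filter.Eventually.of_forall fun n h => absurd h hpos
  have hnQ : (0 : ℚ) < n := Nat.cast_pos.2 hn0
  have key : ∀ k : ℕ, k ≤ n → Reach true N m fun p α => m p α + k / n * runEffect N σ p α := by
    intro k
    induction k with
    | zero => intro _; simpa using Reach.refl true N m
    | succ k ih =>
      intro hk
      refine (ih (by omega)).trans ⟨scaleRun (1 / n) σ, hσ.scaleRun (by positivity),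
        runFireable_of_runConsume_le (hσ.scaleRun (by positivity))
          (hm.1.add_mul (finCols_runEffect N σ) _) fun p α => ?_, ?_⟩
      · have hkQ : (k : ℚ) + 1 ≤ n := by exact_mod_cast hk
        have hk0 : (0 : ℚ) ≤ k := Nat.cast_nonneg k
        have hsplit : m p α + k / n * runEffect N σ p α =
            ((n - k) * m p α + k * (m p α + runEffect N σ p α)) / n := by
          field_simp
          ring
        rw [runConsume_scaleRun, hsplit, one_div_mul_eq_div]
        gcongr
        have hm0 := hm.2 rfl p α
        have hf0 := hm' p α
        rcases eq_or_ne (runConsume N σ p α) 0 with hc | hc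
        · rw [hc]
          exact add_nonneg (mul_nonneg (by linarith) hm0) (mul_nonneg hk0 hf0)
        · have hmem := mem_preSet_of_runConsume_ne_zero hc
          rcases hf0.eq_or_lt with hf | hf
          · have hprod : runProduce N σ p α = 0 := by
              by_contra hne
              exact (hpost _ (mem_postSet_of_runProduce_ne_zero hne)).ne hf
            have hcm : runConsume N σ p α = m p α := by
              linarith [runEffect_eq_sub N σ p α]
            rw [hcm, ← hf]
            nlinarith
          · obtain ⟨h₁, h₂⟩ := hn _ hmem hf
            have h₃ := mul_le_mul_of_nonneg_left h₁ (by linarith : (0 : ℚ) ≤ n - k)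
            have h₄ := mul_le_mul_of_nonneg_left h₂ hk0
            refine le_of_mul_le_mul_left ?_ hnQ
            linarith
      · funext p α
        rw [runEffect_scaleRun]
        push_cast
        ring
  simpa [hnQ.ne'] using key n le_rfl

/-- Characterization of ℚ⁺-reachability: `f` is ℚ⁺-reachable
from `i` iff there are ℚ⁺-markings `i'`, `f'` and a ℚ-run `σ'` with (1) `i'`
ℚ⁺-reachable from `i`, (2) `i' →σ'_ℚ f'`, (3) `f` ℚ⁺-reachable from `f'`,
(4) `i'` positive on `Pre(σ')`, (5) `f'` positive on `Post(σ')`. -/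
theorem qplus_reach_characterization
    (N : UDPN P T V) (i f : P → ℕ → ℚ)
    (hi : IsMarking true i) (hf : IsMarking true f) :
    Reach true N i f ↔
      ∃ (i' f' : P → ℕ → ℚ) (σ' : List (Step T V)),
        IsMarking true i' ∧ IsMarking true f' ∧ IsRun σ' ∧
        Reach true N i i' ∧
        Reaches false N i' σ' f' ∧
        Reach true N f' f ∧
        (∀ pa ∈ preSet N σ', 0 < i' pa.1 pa.2) ∧
        (∀ pa ∈ postSet N σ', 0 < f' pa.1 pa.2) := by
  constructor
  · intro h
    exact ⟨i, i, [], hi, hi, by simp [IsRun], Reach.refl true N i, ⟨trivial, by simp [runEffect]⟩,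
      h, by simp [preSet], by simp [postSet]⟩
  · rintro ⟨i', f', σ, hi', hf', hσ, h₁, ⟨-, rfl⟩, h₃, hpre, hpost⟩
    exact (h₁.trans (reach_of_pos_on_preSet_postSet hi' hσ (hf'.2 rfl) hpre hpost)).trans h₃
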